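/- For every infinite cardinal λ and every positive integer n, the relation (λ^{+n},n,λ)→n+2 holds; that is, every map F : [λ^{+n}]^n → [λ^{+n}]^{<λ} admits an (n+2)-element free set. -/

import Mathlib

/-!
The `n`-element subsets of an `(n+2)`-element set `M` can be separated from points by `n + 1`
linear orders: fix `w ∈ M`, and for each `i ≠ w` take an order whose top is `i` and whose second
largest element is `w`. For `X` of size `n` and `y ∉ X`, one of these orders puts `y` strictly
above all of `X`: the `y`-th one if `y ≠ w`, and the `i`-th one for some `i ∉ X`, `i ≠ w`, if
`y = w`. Recording only the ranks `2` (top), `1` (the point `w`), `0` (the rest) gives a map of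
`M` into the product of `n + 1` three-element chains (`vec`).

It then suffices to know (`exists_free_grid`) that, for a monotone set mapping `G` on a set of size
`λ⁺ⁿ` sending finite sets to sets of size `< λ`, there is a map `f` from the product of `n + 1`
three-element chains such that `f y ∉ G (f '' Iic x)` whenever `y ≰ x`. This goes by induction on
`n`. For one chain the values are chosen greedily. For the step from `κ = λ⁺ⁿ` to `κ⁺`, choose three
copies `e 0, e 1, e 2` of `κ` in the given set, each avoiding `G s` for all finite `s` inside the
earlier copies, which is possible since there are only `κ` such `s`. Pulling `G` back along all three
copies at once gives a set mapping on `κ`; if `f'` is the grid map for it, then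
`f v = e (v 0) (f' (tail v))` works: a failure of `≤` in the coordinate `0` is handled by
the choice of the copies, any other one by the induction hypothesis.
-/

universe u

open Cardinal

/-- The `n`-th cardinal successor `κ⁺ⁿ`. -/
noncomputable def succN (κ : Cardinal.{u}) (n : ℕ) : Cardinal.{u} := Order.succ^[n] κ

/-- The relation `(κ,r,λ)→ρ`: every set mapping `F : [κ]^r → [κ]^{<λ}` of order `r` has
a free set of cardinality `ρ`, i.e. a set `H` with `F(X) ∩ H ⊆ X` for all `X ∈ [H]^r`. -/
def ArrowFree (κ : Cardinal.{u}) (r : ℕ) (lam ρ : Cardinal.{u}) : Prop :=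
  ∀ A : Type u, #A = κ →
    ∀ F : Set A → Set A, (∀ X : Set A, #↥X = (r : Cardinal) → #↥(F X) < lam) →
      ∃ H : Set A, #↥H = ρ ∧
        ∀ X : Set A, X ⊆ H → #↥X = (r : Cardinal) → F X ∩ H ⊆ X

open Set

/-- A finite union of sets of size `< lam` has size `< lam`. -/
theorem mk_biUnion_lt_of_finite {ι A : Type u} {lam : Cardinal.{u}} (hlam : ℵ₀ ≤ lam)
    {s : Set ι} (hs : s.Finite) (g : ι → Set A) (hg : ∀ i ∈ s, #(g i) < lam) :
    #(⋃ i ∈ s, g i : Set A) < lam := by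
  induction s, hs using Set.Finite.induction_on with
  | empty =>
    simpa using (aleph0_pos.trans_le hlam)
  | @insert a s _ _ ih =>
    rw [biUnion_insert]
    exact (mk_union_le _ _).trans_lt (add_lt_of_lt hlam (hg a (mem_insert _ _))
      (ih fun i hi => hg i (mem_insert_of_mem _ hi)))

/-- Outside all `G s`, for `s` a finite subset of a given set `S` of size at most `κ`, there is a
copy of `κ`. -/
theorem exists_copy {A B : Type u} {lam κ : Cardinal.{u}} (hlam : ℵ₀ ≤ lam) (hκ : lam ≤ κ)
    (hA : #A = Order.succ κ) (hB : #B = κ) (G : Set A → Set A)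
    (hG : ∀ s : Set A, s.Finite → #(G s) < lam) (S : Set A) (hS : #S ≤ κ) :
    ∃ e : B → A, Function.Injective e ∧
      ∀ b, ∀ s : Set A, s.Finite → s ⊆ S → e b ∉ G s := by
  have hκ0 : ℵ₀ ≤ κ := hlam.trans hκ
  have : Infinite A := by
    rw [infinite_iff, hA]; exact hκ0.trans (Order.le_succ κ)
  set H : Set A := ⋃ t : Finset S, G (Subtype.val '' (t : Set S)) with hH
  have hfs : #(Finset S) ≤ κ := by
    cases finite_or_infinite S with
    | inl h =>
      have := Fintype.ofFinite S
      exact (lt_aleph0_of_finite _).le.trans hκ0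
    | inr h => rwa [mk_finset_of_infinite]
  have hHκ : #H ≤ κ := by
    refine (mk_iUnion_le _).trans ?_
    refine (mul_le_mul' hfs (ciSup_le' fun t => ?_)).trans (mul_eq_self hκ0).le
    exact ((hG _ (t.finite_toSet.image _)).le).trans hκ
  have hc : #(Hᶜ : Set A) = #A :=
    mk_compl_of_infinite H (by rw [hA]; exact Order.lt_succ_of_le hHκ)
  have hle : #B ≤ #(Hᶜ : Set A) := by rw [hc, hA, hB]; exact Order.le_succ κ
  obtain ⟨e⟩ := hle
  refine ⟨fun b => (e b).1, Subtype.val_injective.comp e.injective, fun b s hs hsS hmem => ?_⟩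
  apply (e b).2
  have hfin : (Subtype.val ⁻¹' s : Set S).Finite := hs.preimage Subtype.val_injective.injOn
  refine mem_iUnion.2 ⟨hfin.toFinset, ?_⟩
  rwa [Finite.coe_toFinset, Subtype.image_preimage_coe, inter_eq_right.2 hsS]

theorem le_succN (lam : Cardinal.{u}) (n : ℕ) : lam ≤ succN lam n := by
  induction n with
  | zero => exact le_rfl
  | succ n ih =>
    rw [succN, Function.iterate_succ_apply']
    exact ih.trans (Order.le_succ _)

/-- A free map from the product of `n + 1` three-element chains into a set of size `λ⁺ⁿ`. -/
theorem exists_free_grid (lam : Cardinal.{u}) (hlam : ℵ₀ ≤ lam) (n : ℕ) :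
    ∀ A : Type u, #A = succN lam n → ∀ G : Set A → Set A, Monotone G →
      (∀ s : Set A, s.Finite → #(G s) < lam) →
      ∃ f : (Fin (n + 1) → Fin 3) → A, ∀ x y, ¬ y ≤ x → f y ∉ G (f '' Iic x) := by
  induction n with
  | zero =>
    intro A hA G hmono hG
    have pick : ∀ s : Set A, s.Finite → ∃ a, a ∉ G s := by
      intro s hs
      by_contra! h
      have h1 : G s = Set.univ := eq_univ_of_forall h
      have h2 := hG s hs
      rw [h1, mk_univ, hA] at h2
      exact lt_irrefl _ h2
    obtain ⟨a0, -⟩ := pick ∅ finite_empty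
    obtain ⟨a1, h1⟩ := pick {a0} (finite_singleton _)
    obtain ⟨a2, h2⟩ := pick {a0, a1} (toFinite _)
    have h2' : a2 ∉ G {a0} := fun h => h2 (hmono (by simp) h)
    refine ⟨fun v => ![a0, a1, a2] (v 0), fun x y hxy => ?_⟩
    have hlt : x 0 < y 0 := by
      by_contra! h
      exact hxy fun i => by rwa [Fin.eq_zero i]
    have himg : (fun v : Fin (0 + 1) → Fin 3 => ![a0, a1, a2] (v 0)) '' Iic x ⊆
        ![a0, a1, a2] '' Iic (x 0) := by
      rintro _ ⟨v, hv, rfl⟩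
      exact ⟨v 0, hv 0, rfl⟩
    suffices key : ∀ c d : Fin 3, c < d → ![a0, a1, a2] d ∉ G (![a0, a1, a2] '' Iic c) from
      fun h => key _ _ hlt (hmono himg h)
    clear himg hlt hxy x y
    intro c d hlt h
    have key0 : ![a0, a1, a2] '' Iic (0 : Fin 3) ⊆ {a0} := by
      rintro _ ⟨v, hv, rfl⟩
      obtain rfl : v = 0 := le_antisymm hv (Fin.zero_le _)
      simp
    have key1 : ![a0, a1, a2] '' Iic (1 : Fin 3) ⊆ {a0, a1} := by
      rintro _ ⟨v, hv, rfl⟩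
      fin_cases v
      · simp
      · simp
      · exact absurd hv (by simp [Fin.le_def])
    fin_cases c <;> fin_cases d <;> first
      | exact absurd hlt (by decide)
      | exact h1 (hmono key0 h)
      | exact h2' (hmono key0 h)
      | exact h2 (hmono key1 h)
  | succ n ih =>
    intro A hA G hmono hG
    set κ := succN lam n with hκdef
    have hκ : lam ≤ κ := le_succN lam n
    have hκ0 : ℵ₀ ≤ κ := hlam.trans hκ
    rw [succN, Function.iterate_succ_apply'] at hA
    change #A = Order.succ κ at hA
    let B : Type u := κ.out
    have hB : #B = κ := mk_out κ
    have hr : ∀ e : B → A, #(range e) ≤ κ := fun e => mk_range_le.trans hB.le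
    obtain ⟨e0, i0, -⟩ := exists_copy hlam hκ hA hB G hG ∅ (by simp)
    obtain ⟨e1, i1, h1⟩ := exists_copy hlam hκ hA hB G hG (range e0) (hr e0)
    obtain ⟨e2, i2, h2⟩ := exists_copy hlam hκ hA hB G hG (range e0 ∪ range e1)
      ((mk_union_le _ _).trans ((add_le_add (hr e0) (hr e1)).trans (add_eq_self hκ0).le))
    let e : Fin 3 → B → A := ![e0, e1, e2]
    have he : ∀ c, Function.Injective (e c) := by
      intro c; fin_cases c
      · exact i0
      · exact i1
      · exact i2
    have hlayer : ∀ c d : Fin 3, c < d → ∀ b, ∀ s : Set A, s.Finite →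
        (∀ a ∈ s, ∃ c' ≤ c, a ∈ range (e c')) → e d b ∉ G s := by
      intro c d hcd b s hs hsub
      have hd1 : d = 1 → s ⊆ range e0 := by
        rintro rfl a ha
        obtain ⟨c', hc', hm⟩ := hsub a ha
        obtain rfl : c' = 0 := by omega
        exact hm
      have hd2 : s ⊆ range e0 ∪ range e1 := by
        intro a ha
        obtain ⟨c', hc', hm⟩ := hsub a ha
        have : c' = 0 ∨ c' = 1 := by omega
        rcases this with rfl | rfl
        · exact Or.inl hm
        · exact Or.inr hm
      have : d = 1 ∨ d = 2 := by omega
      rcases this with rfl | rfl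
      · exact h1 b s hs (hd1 rfl)
      · exact h2 b s hs hd2
    let U : Set B → Set A := fun S => ⋃ c, e c '' S
    have hU : Monotone U := fun S T h => iUnion_mono fun c => image_mono h
    obtain ⟨f', hf'⟩ := ih B hB (fun S => ⋃ c ∈ (univ : Set (ULift.{u} (Fin 3))),
        e c.down ⁻¹' G (U S))
      (fun S T h => iUnion₂_mono fun c _ => preimage_mono (hmono (hU h)))
      (fun S hS => mk_biUnion_lt_of_finite hlam finite_univ _ fun c _ =>
        (mk_preimage_of_injective _ _ (he c.down)).trans_lt
          (hG _ (finite_iUnion fun c => hS.image _)))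
    refine ⟨fun v => e (v 0) (f' (Fin.tail v)), fun x y hxy => ?_⟩
    by_cases h0 : y 0 ≤ x 0
    · have ht : ¬ Fin.tail y ≤ Fin.tail x := by
        intro h
        refine hxy fun i => ?_
        refine Fin.cases h0 (fun j => h j) i
      refine fun h => hf' _ _ ht ?_
      refine mem_iUnion₂.2 ⟨⟨y 0⟩, mem_univ _, ?_⟩
      refine hmono ?_ h
      rintro _ ⟨v, hv, rfl⟩
      exact mem_iUnion.2 ⟨v 0, mem_image_of_mem _ ⟨Fin.tail v, fun j => hv j.succ, rfl⟩⟩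
    · refine hlayer (x 0) (y 0) (not_le.1 h0) _ _ (toFinite _) ?_
      rintro _ ⟨v, hv, rfl⟩
      exact ⟨v 0, hv 0, mem_range_self _⟩

/-- The ranks of the points of `Option (Fin (n + 1))` in the `n + 1` orders, the `i`-th of which
has top `some i` and, right below it, `none`; all other points get rank `0`. -/
def vec (n : ℕ) (m : Option (Fin (n + 1))) : Fin (n + 1) → Fin 3 := fun i =>
  if m = some i then 2 else if m = none then 1 else 0

/-- A point `y` is separated from a set `Y ∌ y` of points missing some `some i`. -/
theorem exists_separating (n : ℕ) (Y : Set (Option (Fin (n + 1)))) (y : Option (Fin (n + 1)))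
    (hy : y ∉ Y) (hY : ∃ i, some i ∉ Y) :
    ∃ x, (∀ z ∈ Y, vec n z ≤ x) ∧ ¬ vec n y ≤ x := by
  cases y with
  | some i =>
    refine ⟨fun j => if j = i then 1 else 2, fun z hz j => ?_, fun h => ?_⟩
    · have : z ≠ some i := by rintro rfl; exact hy hz
      by_cases hj : j = i
      · subst hj
        simp only [vec, if_neg this, if_true]
        split_ifs <;> simp
      · simp only [if_neg hj]
        exact Fin.le_last _
    · have := h i
      simp [vec] at this
  | none =>
    obtain ⟨i, hi⟩ := hY
    refine ⟨fun j => if j = i then 0 else 2, fun z hz j => ?_, fun h => ?_⟩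
    · have h1 : z ≠ some i := by rintro rfl; exact hi hz
      have h2 : z ≠ none := by rintro rfl; exact hy hz
      by_cases hj : j = i
      · subst hj
        simp [vec, h1, h2]
      · simp only [if_neg hj]
        exact Fin.le_last _
    · have := h i
      simp [vec] at this

/-- `(λ^{+n},n,λ)→n+2` holds for every infinite cardinal `λ` and every positive
integer `n`. -/
theorem stmt16 (lam : Cardinal.{u}) (hlam : ℵ₀ ≤ lam) (n : ℕ) (hn : 0 < n) :
    ArrowFree (succN lam n) n lam ((n + 2 : ℕ) : Cardinal) := by
  intro A hA F hF
  -- The summand `S` makes the grid map injective on the points of `vec`.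
  let G : Set A → Set A := fun S => S ∪ ⋃ X ∈ {X : Set A | X ⊆ S ∧ #X = (n : Cardinal)}, F X
  have hmono : Monotone G := fun S T h => union_subset_union h
    (biUnion_mono (fun X hX => ⟨hX.1.trans h, hX.2⟩) fun _ _ => le_rfl)
  have hG : ∀ s : Set A, s.Finite → #(G s) < lam := fun s hs =>
    (mk_union_le _ _).trans_lt (add_lt_of_lt hlam (hs.lt_aleph0.trans_le hlam)
      (mk_biUnion_lt_of_finite hlam (hs.finite_subsets.subset fun X hX => hX.1) _
        fun X hX => hF X hX.2))
  obtain ⟨f, hf⟩ := exists_free_grid lam hlam n A hA G hmono hG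
  let h : Option (Fin (n + 1)) → A := fun m => f (vec n m)
  have hne : ∀ i m, m ≠ some i → h (some i) ≠ h m := by
    intro i m hm heq
    obtain ⟨x, hx, hx'⟩ := exists_separating n {m} (some i) (fun h => hm h.symm)
      ⟨i, fun h => hm h.symm⟩
    refine hf x _ hx' (Or.inl ?_)
    exact ⟨vec n m, hx m rfl, heq.symm⟩
  have hinj : Function.Injective h := by
    intro a b hab
    by_contra hab'
    cases a with
    | some i => exact hne i b (Ne.symm hab') hab
    | none =>
      cases b with
      | none => exact hab' rfl
      | some j => exact hne j none (by simp) hab.symm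
  refine ⟨range h, ?_, ?_⟩
  · have := mk_range_eq_of_injective hinj
    simpa [add_assoc, one_add_one_eq_two] using this
  · rintro X hX hXn _ ⟨haF, y, rfl⟩
    by_contra hyX
    have hXfin : X.Finite := by
      rw [← lt_aleph0_iff_set_finite, hXn]; exact natCast_lt_aleph0
    have hmiss : ∃ i, some i ∉ h ⁻¹' X := by
      by_contra! hall
      have hsub : range (fun i : Fin (n + 1) => h (some i)) ⊆ X := by
        rintro _ ⟨i, rfl⟩
        exact hall i
      have h1 := ncard_le_ncard hsub hXfin
      have h2 : X.ncard = n := by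
        rw [ncard_def, encard, ENat.card, hXn]; simp
      rw [h2, ← image_univ, ncard_image_of_injective _
        (fun i j hij => Option.some_injective _ (hinj hij)), ncard_univ] at h1
      simp at h1
    obtain ⟨x, hx, hx'⟩ := exists_separating n (h ⁻¹' X) y hyX hmiss
    refine hf x _ hx' (Or.inr (mem_iUnion₂.2 ⟨X, ⟨fun a ha => ?_, hXn⟩, haF⟩))
    obtain ⟨m, rfl⟩ := hX ha
    exact ⟨vec n m, hx m ha, rfl⟩
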